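/- Let g : ℝ → ℝ be five times continuously differentiable and define u(x,t) = g(x·(-t)^{-1/5}) for x ∈ ℝ and t < 0. Then u satisfies the PDE ∂ₜu = -∂ₓ⁴(u·∂ₓu) at every point of ℝ × (-∞, 0) if and only if g satisfies the ODE (g·g')⁽⁴⁾(z) = -(1/5)·z·g'(z) for every z ∈ ℝ, where (g·g')⁽⁴⁾ denotes the fourth derivative of the product g·g'. -/

import Mathlib

/-!
Put `c = (-t)^(-1/5)`, so that `c ^ 5 = 1 / (-t)`, and `z = x * c`. The chain rule gives
`u_t = (1/5) * c ^ 5 * z * g' z`, since `dc/dt = c ^ 6 / 5`, while each `x`-derivative contributes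
one factor `c`, so that `(u * u_x)_xxxx = c ^ 5 * (g * g')⁗ z`. As `c ≠ 0`, the PDE at `(x, t)` is
therefore the ODE at `z`, and at `t = -1` the point `z = x` is arbitrary.
-/

theorem scale_pow_five {t : ℝ} (ht : t < 0) : ((-t) ^ (-(1:ℝ)/5)) ^ 5 = (-t)⁻¹ := by
  rw [← Real.rpow_natCast, ← Real.rpow_mul (by linarith), ← Real.rpow_neg_one]
  norm_num

theorem deriv_ansatz_time {g : ℝ → ℝ} (hg : Differentiable ℝ g) (x : ℝ) {t : ℝ} (ht : t < 0) :
    deriv (fun s : ℝ => g (x * (-s) ^ (-(1:ℝ)/5))) t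
      = ((-t) ^ (-(1:ℝ)/5)) ^ 5 *
        (1/5 * (x * (-t) ^ (-(1:ℝ)/5)) * deriv g (x * (-t) ^ (-(1:ℝ)/5))) := by
  have hc : HasDerivAt (fun s : ℝ => (-s) ^ (-(1:ℝ)/5))
      (-1 * (-(1:ℝ)/5) * (-t) ^ (-(1:ℝ)/5 - 1)) t :=
    (hasDerivAt_neg t).rpow_const (Or.inl (by linarith))
  have h := ((hg (x * (-t) ^ (-(1:ℝ)/5))).hasDerivAt.comp t (hc.const_mul x)).deriv
  rw [Real.rpow_sub_one (by linarith), div_eq_mul_inv _ (-t), ← scale_pow_five ht] at h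
  refine h.trans ?_
  ring

theorem iteratedDeriv_ansatz_space {g : ℝ → ℝ} (hg : ContDiff ℝ 5 g) (c x : ℝ) :
    iteratedDeriv 4 (fun y : ℝ => g (y * c) * deriv (fun y' : ℝ => g (y' * c)) y) x
      = c ^ 5 * iteratedDeriv 4 (fun w : ℝ => g w * deriv g w) (x * c) := by
  have hd : ContDiff ℝ 4 (deriv g) := (contDiff_succ_iff_deriv (n := 4).1 hg).2.2
  have hF : ContDiff ℝ 4 (fun w : ℝ => g w * deriv g w) := (hg.of_le (by norm_num)).mul hd
  have hfun : (fun y : ℝ => g (y * c) * deriv (fun y' : ℝ => g (y' * c)) y)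
      = fun y => c * (fun y => (fun w : ℝ => g w * deriv g w) (c * y)) y := by
    funext y
    have h := ((hg.differentiable (by norm_num) (y * c)).hasDerivAt.comp y
      ((hasDerivAt_id y).mul_const c)).deriv
    have h' : deriv (fun y' : ℝ => g (y' * c)) y = deriv g (y * c) * (1 * c) := h
    rw [h']
    simp only [mul_comm c y]
    ring
  rw [hfun, iteratedDeriv_const_mul_field, iteratedDeriv_comp_const_mul hF]
  simp only [mul_comm c x]
  ring


/-- The blow-up similarity ansatz `u(x,t) = g(x·(-t)^{-1/5})` (for `t < 0`) satisfies the
fully divergent fifth-order NDE `u_t = -(u·u_x)_xxxx` on `ℝ × (-∞,0)` if and only if `g`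
satisfies the ODE `(g·g')⁽⁴⁾(z) = -(1/5)·z·g'(z)` on `ℝ`. -/
theorem similarity_ansatz_iff_ODE_NDE14 (g : ℝ → ℝ) (hg : ContDiff ℝ 5 g) :
    (∀ x : ℝ, ∀ t : ℝ, t < 0 →
      deriv (fun s : ℝ => g (x * (-s) ^ (-(1:ℝ)/5))) t
        = -(iteratedDeriv 4
            (fun y : ℝ => g (y * (-t) ^ (-(1:ℝ)/5))
              * deriv (fun y' : ℝ => g (y' * (-t) ^ (-(1:ℝ)/5))) y) x))
    ↔ (∀ z : ℝ, iteratedDeriv 4 (fun w : ℝ => g w * deriv g w) z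
        = -(1/5) * z * deriv g z) := by
  have key : ∀ x t : ℝ, t < 0 →
      ((deriv (fun s : ℝ => g (x * (-s) ^ (-(1:ℝ)/5))) t
        = -(iteratedDeriv 4
            (fun y : ℝ => g (y * (-t) ^ (-(1:ℝ)/5))
              * deriv (fun y' : ℝ => g (y' * (-t) ^ (-(1:ℝ)/5))) y) x))
      ↔ iteratedDeriv 4 (fun w : ℝ => g w * deriv g w) (x * (-t) ^ (-(1:ℝ)/5))
        = -(1/5) * (x * (-t) ^ (-(1:ℝ)/5)) * deriv g (x * (-t) ^ (-(1:ℝ)/5))) := by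
    intro x t ht
    have hc : ((-t) ^ (-(1:ℝ)/5)) ^ 5 ≠ 0 :=
      pow_ne_zero _ (Real.rpow_pos_of_pos (by linarith) _).ne'
    rw [deriv_ansatz_time (hg.differentiable (by norm_num)) x ht,
      iteratedDeriv_ansatz_space hg, ← mul_neg, mul_right_inj' hc]
    constructor <;> intro h <;> linarith
  constructor
  · intro h z
    simpa using (key z (-1) (by norm_num)).1 (h z (-1) (by norm_num))
  · intro h x t ht
    exact (key x t ht).2 (h _)
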